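/- Assume hypothesis (H) and let (ũ, x̃) be a scheme pair. Then ũ'(c) ≤ u_b/(b − c). -/

import Mathlib

open Set Filter

noncomputable section

/-- Partial derivative of a two-argument function with respect to its first argument. -/
def pd1 (f : ℝ → ℝ → ℝ) (u x : ℝ) : ℝ := deriv (fun t => f t x) u

/-- Partial derivative of a two-argument function with respect to its second argument. -/
def pd2 (f : ℝ → ℝ → ℝ) (u x : ℝ) : ℝ := deriv (fun s => f u s) x

/-- The nonlinearity `𝒩(u,x) = N(u,x)·u`. -/
def Ncal (N : ℝ → ℝ → ℝ) (u x : ℝ) : ℝ := N u x * u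

/-- `u` is twice continuously differentiable on `s`, with first derivative `u'`
and second derivative `u''` (derivatives within `s`). -/
def IsC2On (u u' u'' : ℝ → ℝ) (s : Set ℝ) : Prop :=
  (∀ x ∈ s, HasDerivWithinAt u (u' x) s x) ∧
  (∀ x ∈ s, HasDerivWithinAt u' (u'' x) s x) ∧
  ContinuousOn u'' s

/-- The straight boundary value problem: `u ∈ C²([a,b])`, `u'' = 𝒩(u(x),x)` on `[a,b]`,
`u(a) = 0`, `u(b) = ub`. -/
def IsStraightBVP (N : ℝ → ℝ → ℝ) (a b ub : ℝ) (u u' u'' : ℝ → ℝ) : Prop :=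
  IsC2On u u' u'' (Icc a b) ∧
  (∀ x ∈ Icc a b, u'' x = Ncal N (u x) x) ∧
  u a = 0 ∧ u b = ub

/-- Hypothesis (H): `N`, `∂N/∂x`, `∂N/∂u`, `∂²N/∂x∂u`, `∂²N/∂u²` are all
nonnegative for `u ≥ 0` and `x ∈ [a,b]`. -/
def HypH (N : ℝ → ℝ → ℝ) (a b : ℝ) : Prop :=
  ∀ u : ℝ, 0 ≤ u → ∀ x ∈ Icc a b,
    0 ≤ N u x ∧ 0 ≤ pd2 N u x ∧ 0 ≤ pd1 N u x ∧
    0 ≤ pd2 (pd1 N) u x ∧ 0 ≤ pd1 (pd1 N) u x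

/-- A mesh: finitely many strictly increasing points `pt 0 < pt 1 < ⋯ < pt n`. -/
structure Mesh where
  n : ℕ
  pt : ℕ → ℝ
  npos : 0 < n
  mono : ∀ i < n, pt i < pt (i + 1)

/-- The coefficient `α_i(p,q,x)` of the straight discretized equation,
where `xi` is the mesh point `x_i`. -/
def alphaC (N : ℝ → ℝ → ℝ) (xi p q x : ℝ) : ℝ :=
  (pd1 N q xi * p + pd2 N q xi) * (x - xi) + N q xi

/-- The coefficient `β_i(p,q,v)` of the inverse discretized equation,
where `ui` is the (shifted) mesh point `ū_i`. -/
def betaC (N : ℝ → ℝ → ℝ) (ui p q v : ℝ) : ℝ :=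
  -(pd1 (Ncal N) ui q + pd2 (Ncal N) ui q * p) * (v - ui) - Ncal N ui q

/-- Shifted mesh knots `ū_i = max(u_i, s)`. -/
def ubar (m : Mesh) (s : ℝ) (i : ℕ) : ℝ := max (m.pt i) s

/-- A straight scheme solution on `[a,c]` with respect to the mesh `m`:
`ũ ∈ C¹([a,c])` and on each mesh subinterval `[x_i, x_{i+1}]` the second
derivative of `ũ` equals `α_i(ũ'(x_i), ũ(x_i), x)·ũ(x)`. -/
def IsStraightSol (N : ℝ → ℝ → ℝ) (a c : ℝ) (m : Mesh) (u u' : ℝ → ℝ) : Prop :=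
  (∀ x ∈ Icc a c, HasDerivWithinAt u (u' x) (Icc a c) x) ∧
  ContinuousOn u' (Icc a c) ∧
  ∀ i < m.n, ∀ x ∈ Icc (m.pt i) (m.pt (i + 1)),
    HasDerivWithinAt u'
      (alphaC N (m.pt i) (u' (m.pt i)) (u (m.pt i)) x * u x)
      (Icc (m.pt i) (m.pt (i + 1))) x

/-- An inverse scheme solution on `[s, ub]` with respect to the mesh `m` (shifted by `s`):
`x̃ ∈ C¹([s,ub])` and on each subinterval `[ū_i, ū_{i+1}]` the second derivative of `x̃`
equals `β_i(x̃'(ū_i), x̃(ū_i), v)·(x̃'(v))³`. -/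
def IsInvSol (N : ℝ → ℝ → ℝ) (ub : ℝ) (m : Mesh) (s : ℝ) (X X' : ℝ → ℝ) : Prop :=
  (∀ v ∈ Icc s ub, HasDerivWithinAt X (X' v) (Icc s ub) v) ∧
  ContinuousOn X' (Icc s ub) ∧
  ∀ i < m.n, ∀ v ∈ Icc (ubar m s i) (ubar m s (i + 1)),
    HasDerivWithinAt X'
      (betaC N (ubar m s i) (X' (ubar m s i)) (X (ubar m s i)) v * (X' v) ^ 3)
      (Icc (ubar m s i) (ubar m s (i + 1))) v

/-- A scheme pair `(ũ, x̃)`. -/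
def IsSchemePair (N : ℝ → ℝ → ℝ) (a b c ub : ℝ) (ms mi : Mesh)
    (u u' X X' : ℝ → ℝ) : Prop :=
  IsStraightSol N a c ms u u' ∧ u a = 0 ∧ 0 < u c ∧ u c < ub ∧ u' c ≠ 0 ∧
  IsInvSol N ub mi (u c) X X' ∧ X ub = b ∧ X (u c) = c ∧ X' (u c) = 1 / u' c

/-- A scheme pair additionally satisfying the sign inequalities
`0 < ũ < u_b`, `ũ' > 0`, `ũ'' ≥ 0` on `(a,c]`, and `c < x̃`, `x̃' > 0`, `x̃'' ≤ 0`
on `(ũ(c), u_b]` (second derivatives taken on the mesh subintervals). -/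
def GoodPair (N : ℝ → ℝ → ℝ) (a b c ub : ℝ) (ms mi : Mesh)
    (u u' X X' : ℝ → ℝ) : Prop :=
  IsSchemePair N a b c ub ms mi u u' X X' ∧
  (∀ x ∈ Ioc a c, 0 < u x ∧ u x < ub ∧ 0 < u' x) ∧
  (∀ i < ms.n, ∀ x ∈ Icc (ms.pt i) (ms.pt (i + 1)), x ∈ Ioc a c →
    0 ≤ alphaC N (ms.pt i) (u' (ms.pt i)) (u (ms.pt i)) x * u x) ∧
  (∀ v ∈ Ioc (u c) ub, c < X v ∧ 0 < X' v) ∧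
  (∀ i < mi.n, ∀ v ∈ Icc (ubar mi (u c) i) (ubar mi (u c) (i + 1)), v ∈ Ioc (u c) ub →
    betaC N (ubar mi (u c) i) (X' (ubar mi (u c) i)) (X (ubar mi (u c) i)) v * (X' v) ^ 3 ≤ 0)

/-- All steps of the straight mesh `ms` and of the (shifted) inverse mesh `mi`
are of size at most `h`. -/
def StepLe (ms mi : Mesh) (s h : ℝ) : Prop :=
  (∀ i < ms.n, ms.pt (i + 1) - ms.pt i ≤ h) ∧
  (∀ i < mi.n, ubar mi s (i + 1) - ubar mi s i ≤ h)

/-! The inverse function `X` is concave. On each mesh subinterval its slope `X'` is a nowhere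
vanishing solution of the equation `f' = (β · (X')²) · f`, read as a linear one with a continuous
coefficient; so `X'` stays positive and `X` increases from `c` to `b`. Hence (H) applies at every
knot, where it makes `β` nonpositive, and `X'' = β · (X')³ ≤ 0`. By the mean value theorem the slope
`1 / u'(c)` of `X` at its left endpoint is at least the mean slope `(b - c) / (ub - u(c))`. -/

theorem forall_mem_Icc_of_knots {α : Type*} [LinearOrder α] {k : ℕ → α} {n : ℕ} {P : α → Prop}
    (hk : MonotoneOn k (Iic n)) (zero : P (k 0))
    (step : ∀ i < n, P (k i) → ∀ v ∈ Icc (k i) (k (i + 1)), P v) :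
    ∀ v ∈ Icc (k 0) (k n), P v := by
  induction n with
  | zero =>
    intro v hv
    rwa [le_antisymm hv.2 hv.1]
  | succ n ih =>
    have hP : ∀ v ∈ Icc (k 0) (k n), P v :=
      ih (hk.mono (Iic_subset_Iic.2 n.le_succ)) fun i hi => step i (hi.trans n.lt_succ_self)
    have hkn : k 0 ≤ k n := hk (mem_Iic.2 (Nat.zero_le _)) (mem_Iic.2 n.le_succ) n.zero_le
    intro v hv
    rcases le_total v (k n) with hvn | hnv
    · exact hP v ⟨hv.1, hvn⟩
    · exact step n n.lt_succ_self (hP _ ⟨hkn, le_rfl⟩) v ⟨hnv, hv.2⟩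

theorem ne_zero_of_hasDerivWithinAt_smul {E : Type*} [NormedAddCommGroup E] [NormedSpace ℝ E]
    {f : ℝ → E} {g : ℝ → ℝ} {p q : ℝ} (hg : ContinuousOn g (Icc p q))
    (hf : ∀ t ∈ Icc p q, HasDerivWithinAt f (g t • f t) (Icc p q) t) (hp : f p ≠ 0) :
    ∀ t ∈ Icc p q, f t ≠ 0 := by
  intro w hw hfw
  obtain ⟨K, hK⟩ := isCompact_Icc.exists_bound_of_continuousOn hg
  have hsub : Icc p w ⊆ Icc p q := Icc_subset_Icc_right hw.2
  have hlip : ∀ t ∈ Ioc p w, LipschitzOnWith K.toNNReal (fun x : E => g t • x) univ :=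
    fun t ht => LipschitzOnWith.of_dist_le_mul fun x _ y _ => by
      rw [dist_eq_norm, ← smul_sub, norm_smul, dist_eq_norm]
      gcongr
      exact (hK t (hsub (Ioc_subset_Icc_self ht))).trans K.le_coe_toNNReal
  have hzero : EqOn f (fun _ => 0) (Icc p w) :=
    ODE_solution_unique_of_mem_Icc_left (s := fun _ => univ) hlip
      (fun t ht => ((hf t (hsub ht)).continuousWithinAt).mono hsub)
      (fun t ht => (hf t (hsub (Ioc_subset_Icc_self ht))).mono_of_mem_nhdsWithin
        (Icc_mem_nhdsLE_of_mem ⟨ht.1, ht.2.trans hw.2⟩))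
      (fun _ _ => mem_univ _) continuousOn_const
      (fun t _ => by simpa using hasDerivWithinAt_const t (Iic t) (0 : E))
      (fun _ _ => mem_univ _) hfw
  exact hp (hzero ⟨le_rfl, hw.1⟩)

theorem pos_of_hasDerivWithinAt_mul {f g : ℝ → ℝ} {p q : ℝ} (hg : ContinuousOn g (Icc p q))
    (hf : ∀ t ∈ Icc p q, HasDerivWithinAt f (g t * f t) (Icc p q) t) (hp : 0 < f p) :
    ∀ t ∈ Icc p q, 0 < f t := by
  intro t ht
  by_contra! hft
  have hcont : ContinuousOn f (Icc p q) := fun x hx => (hf x hx).continuousWithinAt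
  obtain ⟨w, hw, hfw⟩ := intermediate_value_Icc' ht.1
    (hcont.mono (Icc_subset_Icc_right ht.2)) ⟨hft, hp.le⟩
  exact ne_zero_of_hasDerivWithinAt_smul hg hf hp.ne' w ⟨hw.1, hw.2.trans ht.2⟩ hfw

section IccDerivative

variable {f f' : ℝ → ℝ} {p q : ℝ}

theorem mapsTo_Icc_of_hasDerivWithinAt_nonneg
    (hf : ∀ t ∈ Icc p q, HasDerivWithinAt f (f' t) (Icc p q) t)
    (hf' : ∀ t ∈ Icc p q, 0 ≤ f' t) : MapsTo f (Icc p q) (Icc (f p) (f q)) :=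
  MonotoneOn.mapsTo_Icc <| monotoneOn_of_hasDerivWithinAt_nonneg (convex_Icc p q)
    (fun t ht => (hf t ht).continuousWithinAt)
    (fun t ht => (hf t (interior_subset ht)).mono interior_subset)
    (fun t ht => hf' t (interior_subset ht))

theorem sub_le_mul_sub_of_hasDerivWithinAt_le {C : ℝ} (hpq : p ≤ q)
    (hf : ∀ t ∈ Icc p q, HasDerivWithinAt f (f' t) (Icc p q) t)
    (hf' : ∀ t ∈ Icc p q, f' t ≤ C) : f q - f p ≤ C * (q - p) := by
  have hderiv : ∀ t ∈ interior (Icc p q), HasDerivAt f (f' t) t := fun t ht =>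
    (hf t (interior_subset ht)).hasDerivAt (mem_interior_iff_mem_nhds.1 ht)
  exact (convex_Icc p q).image_sub_le_mul_sub_of_deriv_le
    (fun t ht => (hf t ht).continuousWithinAt)
    (fun t ht => (hderiv t ht).differentiableAt.differentiableWithinAt)
    (fun t ht => (hderiv t ht).deriv.trans_le (hf' t (interior_subset ht)))
    p (left_mem_Icc.2 hpq) q (right_mem_Icc.2 hpq) hpq

end IccDerivative

namespace Mesh

variable (m : Mesh) {s : ℝ}

theorem monotoneOn_pt : MonotoneOn m.pt (Iic m.n) :=
  monotoneOn_of_le_succ ordConnected_Iic fun i _ _ hi => (m.mono i (Nat.lt_of_succ_le hi)).le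

theorem ubar_mem_Icc (hs : s ≤ m.pt m.n) {i : ℕ} (hi : i ≤ m.n) :
    ubar m s i ∈ Icc s (m.pt m.n) :=
  ⟨le_max_right _ _, max_le (m.monotoneOn_pt hi self_mem_Iic hi) hs⟩

theorem forall_mem_Icc_of_ubar (hs : m.pt 0 ≤ s) {P : ℝ → Prop} (left : P s)
    (step : ∀ i < m.n, P (ubar m s i) → ∀ v ∈ Icc (ubar m s i) (ubar m s (i + 1)), P v) :
    ∀ v ∈ Icc s (m.pt m.n), P v := by
  have hfirst : ubar m s 0 = s := max_eq_right hs
  have hmono : MonotoneOn (ubar m s) (Iic m.n) :=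
    fun _ hi _ hj hij => max_le_max_right s (m.monotoneOn_pt hi hj hij)
  intro v hv
  exact forall_mem_Icc_of_knots hmono (hfirst.symm ▸ left) step v
    ⟨hfirst.symm ▸ hv.1, hv.2.trans (le_max_left _ _)⟩

end Mesh

section Coefficient

variable {N : ℝ → ℝ → ℝ} {u x : ℝ}

theorem pd1_Ncal (hN : DifferentiableAt ℝ (fun t => N t x) u) :
    pd1 (Ncal N) u x = pd1 N u x * u + N u x := by
  simp only [pd1, Ncal]
  rw [deriv_fun_mul hN differentiableAt_fun_id, deriv_id'', mul_one]

theorem pd2_Ncal : pd2 (Ncal N) u x = pd2 N u x * u :=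
  deriv_mul_const_field u

theorem betaC_nonpos {p v : ℝ} (hN : DifferentiableAt ℝ (fun t => N t x) u)
    (hN0 : 0 ≤ N u x) (hN1 : 0 ≤ pd1 N u x) (hN2 : 0 ≤ pd2 N u x)
    (hu : 0 ≤ u) (hp : 0 ≤ p) (hv : u ≤ v) : betaC N u p x v ≤ 0 := by
  have : 0 ≤ v - u := sub_nonneg.2 hv
  have hneg : 0 ≤ (pd1 N u x * u + N u x + pd2 N u x * u * p) * (v - u) + N u x * u := by
    positivity
  rw [betaC, pd1_Ncal hN, pd2_Ncal, Ncal]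
  linarith

end Coefficient

namespace IsInvSol

variable {N : ℝ → ℝ → ℝ} {ub s : ℝ} {m : Mesh} {X X' : ℝ → ℝ}

theorem deriv_pos (hX : IsInvSol N ub m s X X') (hfirst : m.pt 0 ≤ s) (hlast : m.pt m.n = ub)
    (hpos : 0 < X' s) : ∀ v ∈ Icc s ub, 0 < X' v := by
  obtain ⟨-, -, hode⟩ := hX
  rw [← hlast]
  refine m.forall_mem_Icc_of_ubar hfirst hpos fun i hi hPi => ?_
  set k := ubar m s i
  have hcont : ContinuousOn X' (Icc k (ubar m s (i + 1))) :=
    fun v hv => (hode i hi v hv).continuousWithinAt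
  have hβ : Continuous (betaC N k (X' k) (X k)) := by
    unfold betaC
    fun_prop
  exact pos_of_hasDerivWithinAt_mul (g := fun v => betaC N k (X' k) (X k) v * X' v ^ 2)
    (hβ.continuousOn.mul (hcont.pow 2))
    (fun v hv => (hode i hi v hv).congr_deriv (by ring)) hPi

theorem deriv_le_deriv_left (hX : IsInvSol N ub m s X X') (hfirst : m.pt 0 ≤ s)
    (hlast : m.pt m.n = ub) (hX' : ∀ v ∈ Icc s ub, 0 ≤ X' v)
    (hβ : ∀ k ∈ Icc s ub, ∀ v ∈ Icc k ub, betaC N k (X' k) (X k) v ≤ 0) :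
    ∀ v ∈ Icc s ub, X' v ≤ X' s := by
  obtain ⟨-, -, hode⟩ := hX
  subst hlast
  intro v hv
  have hs : s ≤ m.pt m.n := hv.1.trans hv.2
  refine m.forall_mem_Icc_of_ubar (P := fun v => X' v ≤ X' s) hfirst le_rfl
    (fun i hi hPi v hv => ?_) v hv
  have hknot := m.ubar_mem_Icc hs hi.le
  have hsub : Icc (ubar m s i) (ubar m s (i + 1)) ⊆ Icc s (m.pt m.n) :=
    Icc_subset_Icc hknot.1 (m.ubar_mem_Icc hs hi).2
  have hanti : AntitoneOn X' (Icc (ubar m s i) (ubar m s (i + 1))) :=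
    antitoneOn_of_hasDerivWithinAt_nonpos (convex_Icc _ _)
      (fun t ht => (hode i hi t ht).continuousWithinAt)
      (fun t ht => (hode i hi t (interior_subset ht)).mono interior_subset)
      fun t ht =>
        have htk := interior_subset ht
        mul_nonpos_of_nonpos_of_nonneg (hβ _ hknot t ⟨htk.1, (hsub htk).2⟩)
          (pow_nonneg (hX' t (hsub htk)) 3)
  exact (hanti ⟨le_rfl, hv.1.trans hv.2⟩ hv hv.1).trans hPi

end IsInvSol

theorem scheme_pair_slope_upper_bound_general {N : ℝ → ℝ → ℝ} {b c s ub p : ℝ} {m : Mesh}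
    {X X' : ℝ → ℝ} (hs : 0 ≤ s) (hsub : s < ub) (hcb : c < b)
    (hN : ∀ v ∈ Icc s ub, ∀ x ∈ Icc c b, DifferentiableAt ℝ (Function.uncurry N) (v, x))
    (hH : ∀ v ∈ Icc s ub, ∀ x ∈ Icc c b, 0 ≤ N v x ∧ 0 ≤ pd1 N v x ∧ 0 ≤ pd2 N v x)
    (hfirst : m.pt 0 ≤ s) (hlast : m.pt m.n = ub) (hX : IsInvSol N ub m s X X')
    (hXub : X ub = b) (hXs : X s = c) (hX's : X' s * p = 1) :
    p ≤ (ub - s) / (b - c) := by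
  rcases le_or_gt p 0 with hp | hp
  · exact hp.trans (div_nonneg (sub_pos.2 hsub).le (sub_pos.2 hcb).le)
  have hpos : ∀ v ∈ Icc s ub, 0 < X' v :=
    hX.deriv_pos hfirst hlast (pos_of_mul_pos_left (hX's ▸ one_pos) hp.le)
  have hX'_nonneg : ∀ v ∈ Icc s ub, 0 ≤ X' v := fun v hv => (hpos v hv).le
  have hβ : ∀ k ∈ Icc s ub, ∀ v ∈ Icc k ub, betaC N k (X' k) (X k) v ≤ 0 := by
    intro k hk v hv
    have hXk : X k ∈ Icc c b :=
      hXs ▸ hXub ▸ mapsTo_Icc_of_hasDerivWithinAt_nonneg hX.1 hX'_nonneg hk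
    obtain ⟨hN0, hN1, hN2⟩ := hH k hk _ hXk
    have hNk : DifferentiableAt ℝ (fun t => N t (X k)) k :=
      (hN k hk _ hXk).comp k (f := fun t => (t, X k)) (by fun_prop)
    exact betaC_nonpos hNk hN0 hN1 hN2 (hs.trans hk.1) (hX'_nonneg k hk) hv.1
  have hchord : b - c ≤ X' s * (ub - s) := by
    rw [← hXub, ← hXs]
    exact sub_le_mul_sub_of_hasDerivWithinAt_le hsub.le hX.1
      (hX.deriv_le_deriv_left hfirst hlast hX'_nonneg hβ)
  rw [le_div_iff₀ (sub_pos.2 hcb)]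
  calc p * (b - c) ≤ p * (X' s * (ub - s)) := by gcongr
    _ = X' s * p * (ub - s) := by ring
    _ = ub - s := by rw [hX's, one_mul]

/-- under hypothesis (H), any scheme pair `(ũ, x̃)` satisfies
`ũ'(c) ≤ u_b/(b − c)`. -/
theorem scheme_pair_slope_upper_bound
    (a b c ub : ℝ) (hab : a < b) (hub : 0 < ub) (hc : c ∈ Ioo a b)
    (N : ℝ → ℝ → ℝ) (hN : ContDiff ℝ 2 (Function.uncurry N))
    (hH : HypH N a b)
    (ms mi : Mesh) (hms0 : ms.pt 0 = a) (hmsn : ms.pt ms.n = c)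
    (hmi0 : mi.pt 0 = 0) (hmin : mi.pt mi.n = ub)
    (u u' X X' : ℝ → ℝ)
    (hp : IsSchemePair N a b c ub ms mi u u' X X') :
    u' c ≤ ub / (b - c) := by
  obtain ⟨-, -, hs, hsub, hne, hX, hXub, hXs, hX's⟩ := hp
  have hH' : ∀ v ∈ Icc (u c) ub, ∀ x ∈ Icc c b, 0 ≤ N v x ∧ 0 ≤ pd1 N v x ∧ 0 ≤ pd2 N v x :=
    fun v hv x hx =>
      let ⟨hN0, hN2, hN1, _⟩ := hH v (hs.le.trans hv.1) x ⟨hc.1.le.trans hx.1, hx.2⟩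
      ⟨hN0, hN1, hN2⟩
  have hslope : u' c ≤ (ub - u c) / (b - c) :=
    scheme_pair_slope_upper_bound_general hs.le hsub hc.2
      (fun _ _ _ _ => hN.differentiable two_ne_zero _) hH' (hmi0.trans_le hs.le) hmin hX hXub hXs
      (hX's ▸ one_div_mul_cancel hne)
  exact hslope.trans (div_le_div_of_nonneg_right (sub_le_self ub hs.le) (sub_pos.2 hc.2).le)
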